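/- For every X ∈ S₀, the sequence ψ_n(φ_n(X)) converges to X in operator norm, i.e., ‖X − ψ_n(φ_n(X))‖ → 0 as n → ∞. -/

import Mathlib

noncomputable section

open scoped ComplexOrder InnerProductSpace

/-- The Hilbert space ℓ²(ℕ) of square-summable complex sequences. -/
abbrev Hs : Type := lp (fun _ : ℕ => ℂ) 2

/-- The standard orthonormal basis vectors of ℓ²(ℕ) (indexed from 0). -/
def e (i : ℕ) : Hs := lp.single 2 i 1

/-- The matrix unit `E i j : x ↦ ⟨x, e j⟩ e i`. -/
def E (i j : ℕ) : Hs →L[ℂ] Hs := (innerSL ℂ (e j)).smulRight (e i)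

/-- `K₀`: the norm-closed linear span of the matrix units `E i j`, `(i,j) ≠ (0,0)`. -/
def K0 : Submodule ℂ (Hs →L[ℂ] Hs) :=
  (Submodule.span ℂ {T | ∃ i j : ℕ, (i, j) ≠ (0, 0) ∧ T = E i j}).topologicalClosure

/-- The operator system `S₀` spanned by `K₀` and the identity operator. -/
def S0 : Submodule ℂ (Hs →L[ℂ] Hs) := Submodule.span ℂ {(1 : Hs →L[ℂ] Hs)} ⊔ K0

lemma one_mem_S0 : (1 : Hs →L[ℂ] Hs) ∈ S0 :=
  Submodule.mem_sup_left (Submodule.mem_span_singleton_self _)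

/-- The matrix entry `X_{ij} = ⟨X e_j, e_i⟩` of a bounded operator on ℓ²(ℕ). -/
def entry (X : Hs →L[ℂ] Hs) (i j : ℕ) : ℂ := ⟪e i, X (e j)⟫_ℂ

/-- `φ_{n+1}(X) = V_{n+1}* X V_{n+1}`, the upper-left (n+1)×(n+1) corner of `X`. -/
def phi (n : ℕ) (X : Hs →L[ℂ] Hs) : Matrix (Fin (n+1)) (Fin (n+1)) ℂ :=
  fun i j => entry X i j

/-- `Q_{n+1}`: the projection onto the orthocomplement of the span of `e 0, …, e n`. -/
def Qop (n : ℕ) : Hs →L[ℂ] Hs := 1 - ∑ i : Fin (n+1), E i i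

/-- `ψ_{n+1}(Y) = V_{n+1} Y V_{n+1}* + y₀₀ Q_{n+1}`. -/
def psi (n : ℕ) (Y : Matrix (Fin (n+1)) (Fin (n+1)) ℂ) : Hs →L[ℂ] Hs :=
  (∑ i : Fin (n+1), ∑ j : Fin (n+1), Y i j • E i j) + Y 0 0 • Qop n

/-- Positivity in the C*-algebra of m×m matrices over a star ring: `M = N* N`. -/
def MatPos {A : Type*} [Ring A] [StarRing A] {m : ℕ}
    (M : Matrix (Fin m) (Fin m) A) : Prop :=
  ∃ N : Matrix (Fin m) (Fin m) A, M = N.conjTranspose * N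

/-- Complete positivity of a map between star rings: every matrix amplification
preserves positivity. -/
def IsCPfun {A B : Type*} [Ring A] [StarRing A] [Ring B] [StarRing B]
    (θ : A → B) : Prop :=
  ∀ (m : ℕ) (M : Matrix (Fin m) (Fin m) A), MatPos M → MatPos (M.map θ)

lemma aux_inner_e (i j : ℕ) : ⟪e i, e j⟫_ℂ = if i = j then 1 else 0 := by
  unfold e
  rw [lp.inner_single_left, lp.single_apply, Pi.single_apply]
  split_ifs <;> simp

lemma aux_E_apply (i j : ℕ) (x : Hs) : E i j x = ⟪e j, x⟫_ℂ • e i := by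
  simp [E]

lemma aux_E_mul (i j k l : ℕ) : E i j * E k l = if j = k then E i l else 0 := by
  ext1 x
  rw [ContinuousLinearMap.mul_apply, aux_E_apply, aux_E_apply, inner_smul_right, aux_inner_e]
  split_ifs <;> simp [aux_E_apply]

lemma aux_E_star (i j : ℕ) : star (E i j) = E j i := by
  rw [ContinuousLinearMap.star_eq_adjoint]
  symm
  rw [ContinuousLinearMap.eq_adjoint_iff]
  intro x y
  rw [aux_E_apply, aux_E_apply, inner_smul_left, inner_smul_right, inner_conj_symm, mul_comm]

lemma aux_E_mid (X : Hs →L[ℂ] Hs) (i j : ℕ) : E i i * X * E j j = entry X i j • E i j := by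
  ext1 x
  simp only [ContinuousLinearMap.mul_apply, aux_E_apply, ContinuousLinearMap.smul_apply, entry,
    map_smul, inner_smul_right, smul_smul]
  rw [mul_comm]

def auxP (n : ℕ) : Hs →L[ℂ] Hs := ∑ i : Fin (n+1), E i i

lemma auxP_mul_E (n k l : ℕ) (h : k ≤ n) : auxP n * E k l = E k l := by
  unfold auxP
  rw [Finset.sum_mul, Finset.sum_eq_single (⟨k, by omega⟩ : Fin (n+1))]
  · simp [aux_E_mul]
  · intro b _ hb
    rw [aux_E_mul, if_neg]
    intro h'
    exact hb (Fin.ext h')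
  · simp

lemma auxP_star (n : ℕ) : star (auxP n) = auxP n := by
  simp [auxP, aux_E_star]

lemma aux_E_mul_P (n k l : ℕ) (h : l ≤ n) : E k l * auxP n = E k l := by
  have := congrArg star (auxP_mul_E n l k h)
  simpa [star_mul, auxP_star, aux_E_star] using this

lemma auxP_mul_self (n : ℕ) : auxP n * auxP n = auxP n := by
  conv_lhs => rw [auxP, Finset.sum_mul]
  rw [auxP]
  refine Finset.sum_congr rfl fun i _ => ?_
  exact aux_E_mul_P n i i (by omega)

lemma auxP_norm (n : ℕ) : ‖auxP n‖ ≤ 1 :=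
  IsStarProjection.norm_le _ ⟨auxP_mul_self n, auxP_star n⟩

lemma auxPhi (n : ℕ) (X : Hs →L[ℂ] Hs) :
    psi n (phi n X) = auxP n * X * auxP n + entry X 0 0 • (1 - auxP n) := by
  unfold psi Qop phi
  congr 1
  simp only [auxP, Finset.sum_mul, Finset.mul_sum, aux_E_mid]
  exact Finset.sum_comm

lemma aux_e_norm (i : ℕ) : ‖e i‖ = 1 := by
  have h : ‖e i‖ ^ 2 = 1 := by
    rw [← inner_self_eq_norm_sq (𝕜 := ℂ), aux_inner_e]
    simp
  nlinarith [norm_nonneg (e i)]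

lemma aux_entry_norm (X : Hs →L[ℂ] Hs) (i j : ℕ) : ‖entry X i j‖ ≤ ‖X‖ := by
  refine (norm_inner_le_norm _ _).trans ?_
  have := X.le_opNorm (e j)
  rw [aux_e_norm] at *
  linarith

lemma auxPhi_norm (n : ℕ) (X : Hs →L[ℂ] Hs) : ‖psi n (phi n X)‖ ≤ 3 * ‖X‖ := by
  rw [auxPhi]
  have hP := auxP_norm n
  have h1 : ‖auxP n * X * auxP n‖ ≤ ‖X‖ := by
    calc _ ≤ ‖auxP n‖ * ‖X‖ * ‖auxP n‖ := (norm_mul_le _ _).trans (by gcongr; exact norm_mul_le _ _)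
      _ ≤ 1 * ‖X‖ * 1 := by gcongr
      _ = ‖X‖ := by ring
  have h2 : ‖entry X 0 0 • (1 - auxP n)‖ ≤ ‖X‖ * 2 := by
    rw [norm_smul]
    have h3 : ‖(1 : Hs →L[ℂ] Hs)‖ ≤ 1 := ContinuousLinearMap.norm_id_le
    have h4 := norm_sub_le (1 : Hs →L[ℂ] Hs) (auxP n)
    exact mul_le_mul (aux_entry_norm X 0 0) (by linarith) (norm_nonneg _) (norm_nonneg _)
  have := norm_add_le (auxP n * X * auxP n) (entry X 0 0 • (1 - auxP n))
  linarith

lemma auxPhi_add (n : ℕ) (X Y : Hs →L[ℂ] Hs) :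
    psi n (phi n (X + Y)) = psi n (phi n X) + psi n (phi n Y) := by
  simp only [auxPhi, entry, ContinuousLinearMap.add_apply, inner_add_right, mul_add, add_mul,
    add_smul]
  abel

lemma auxPhi_smul (n : ℕ) (c : ℂ) (X : Hs →L[ℂ] Hs) :
    psi n (phi n (c • X)) = c • psi n (phi n X) := by
  simp only [auxPhi, entry, ContinuousLinearMap.smul_apply, inner_smul_right, mul_smul_comm,
    smul_mul_assoc, smul_add, smul_smul]

def auxC : Submodule ℂ (Hs →L[ℂ] Hs) where
  carrier := {X | Filter.Tendsto (fun n : ℕ => psi n (phi n X)) Filter.atTop (nhds X)}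
  add_mem' := by
    intro X Y hX hY
    simpa only [Set.mem_setOf_eq, auxPhi_add] using hX.add hY
  zero_mem' := by
    have h : ∀ n, psi n (phi n 0) = 0 := fun n => by simp [auxPhi, entry]
    simp [h]
  smul_mem' := by
    intro c X hX
    simpa only [Set.mem_setOf_eq, auxPhi_smul] using hX.const_smul c

lemma auxC_closed : IsClosed (auxC : Set (Hs →L[ℂ] Hs)) := by
  refine isClosed_of_closure_subset fun X hX => ?_
  change Filter.Tendsto (fun n : ℕ => psi n (phi n X)) Filter.atTop (nhds X)
  rw [Metric.tendsto_atTop]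
  intro ε hε
  obtain ⟨Y, hY, hd⟩ := Metric.mem_closure_iff.1 hX (ε / 5) (by positivity)
  have hY' : Filter.Tendsto (fun n : ℕ => psi n (phi n Y)) Filter.atTop (nhds Y) := hY
  obtain ⟨N, hN⟩ := Metric.tendsto_atTop.1 hY' (ε / 5) (by positivity)
  refine ⟨N, fun n hn => ?_⟩
  have h1 := hN n hn
  have h2 : dist (psi n (phi n X)) (psi n (phi n Y)) ≤ 3 * dist X Y := by
    have h3 := auxPhi_add n (X - Y) Y
    rw [sub_add_cancel] at h3
    rw [dist_eq_norm, dist_eq_norm, h3, add_sub_cancel_right]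
    exact auxPhi_norm n _
  have h4 := dist_triangle4 (psi n (phi n X)) (psi n (phi n Y)) Y X
  rw [dist_comm Y X] at h4
  linarith

lemma auxS0_le : S0 ≤ auxC := by
  refine sup_le ?_ (Submodule.topologicalClosure_minimal _ ?_ auxC_closed)
  · rw [Submodule.span_singleton_le_iff_mem]
    have h : ∀ n, psi n (phi n 1) = 1 := fun n => by
      simp [auxPhi, entry, auxP_mul_self, aux_inner_e, -inner_self_eq_norm_sq_to_K]
    change Filter.Tendsto (fun n : ℕ => psi n (phi n 1)) Filter.atTop (nhds 1)
    simp only [h]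
    exact tendsto_const_nhds
  · rw [Submodule.span_le]
    rintro T ⟨i, j, hij, rfl⟩
    change Filter.Tendsto (fun n : ℕ => psi n (phi n (E i j))) Filter.atTop (nhds (E i j))
    refine tendsto_const_nhds.congr' ?_
    filter_upwards [Filter.eventually_ge_atTop (max i j)] with n hn
    have h0 : entry (E i j) 0 0 = 0 := by
      rw [entry, aux_E_apply, inner_smul_right, aux_inner_e, aux_inner_e]
      by_cases h : i = 0
      · have : j ≠ 0 := fun h' => hij (by rw [h, h'])
        simp [this]
      · simp [Ne.symm h]
    rw [auxPhi, h0, zero_smul, add_zero, auxP_mul_E n i j (le_trans (le_max_left _ _) hn),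
      aux_E_mul_P n i j (le_trans (le_max_right _ _) hn)]

/-- for every `X ∈ S₀`, `‖X − ψ_n(φ_n(X))‖ → 0` as `n → ∞`. -/
theorem stmt_1 (X : Hs →L[ℂ] Hs) (hX : X ∈ S0) :
    Filter.Tendsto (fun n : ℕ => ‖X - psi n (phi n X)‖) Filter.atTop (nhds 0) := by
  have h : Filter.Tendsto (fun n : ℕ => psi n (phi n X)) Filter.atTop (nhds X) := auxS0_le hX
  have h2 := (tendsto_const_nhds (x := X)).sub h
  rw [sub_self] at h2
  simpa using h2.norm
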